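/- arXiv:1904.12829 — 2 statements merged into one kernel-verified Lean document; each statement's English description precedes it below -/
import Mathlib

section
/- (Compositional concurrent commutativity, part (iii), coincidence of SqPO and DPO composition under independence.) Let C be a category satisfying the stated assumptions, let r1 = (O1 ←o1— K1 —i1→ I1) and r2 = (O2 ←o2— K2 —i2→ I2) be linear rules, and assume μ21 = (I2 ← M21 → O1) is a DPO-admissible match of r2 into r1, with associated pushout N21 (induced morphisms n2 : I2 → N21, n1 : O1 → N21), pushout complements K̄2 (for (i2, n2)) and K̄1 (for (o1, n1)), and assume there exist monomorphisms u : O1 → K̄2 and v : I2 → K̄1 such that (K̄2 → N21) ∘ u = n1 and (K̄1 → N21) ∘ v = n2. Then the pushout-complement square for (i2, n2), i.e. the pair (K2 → K̄2, K̄2 → N21), is a final pullback complement of (n2 : I2 → N21, i2 : K2 → I2); consequently the SqPO composite of r2 with r1 along μ21 (defined like the DPO composite except that K̄2 is constructed as a final pullback complement of (n2, i2) instead of a pushout complement) is isomorphic as a span to the DPO composite r2 ▷[μ21] r1. -/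
open CategoryTheory CategoryTheory.Limits

universe v u

/-- The ambient category possesses an epi-mono factorization. -/
def HasEpiMonoFact (𝒞 : Type u) [Category.{v} 𝒞] : Prop :=
  ∀ {X Y : 𝒞} (f : X ⟶ Y), ∃ (Z : 𝒞) (e : X ⟶ Z) (m : Z ⟶ Y),
    Epi e ∧ Mono m ∧ e ≫ m = f

/-- The ambient category is finitary: every object has only finitely many subobjects. -/
def Finitary (𝒞 : Type u) [Category.{v} 𝒞] : Prop :=
  ∀ X : 𝒞, Finite (Subobject X)

/-- A linear rule: a span `O ⟵o— K —i⟶ I` of monomorphisms. -/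
structure Rule (𝒞 : Type u) [Category.{v} 𝒞] where
  O : 𝒞
  K : 𝒞
  I : 𝒞
  o : K ⟶ O
  i : K ⟶ I
  mono_o : Mono o
  mono_i : Mono i

/-- The data of a DPO direct derivation applying the linear rule `(O ⟵o— K —i⟶ I)`
to an object `X` along the match `m : I ⟶ X`: a pushout complement `(D, k, d)` for
`(i, m)` together with the pushout `Y` of `(o, k)`, with comatch `ms : O ⟶ Y`. -/
structure DerivData {𝒞 : Type u} [Category.{v} 𝒞] {O K I X : 𝒞}
    (o : K ⟶ O) (i : K ⟶ I) (m : I ⟶ X) where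
  D : 𝒞
  k : K ⟶ D
  d : D ⟶ X
  poc : IsPushout i k m d
  Y : 𝒞
  ms : O ⟶ Y
  ds : D ⟶ Y
  po : IsPushout o k ms ds

/-- The data witnessing that the span `μ21 = (I2 ⟵p2— M —p1⟶ O1)` of monomorphisms
is a DPO-admissible match of the rule `r2` into the rule `r1`, together with the
construction of the DPO composite rule `r2 ▷[μ21] r1`: the pushout `N` of `μ21`, a
pushout complement `K2b` for `(r2.i, n2)` with pushout `O21` of `(r2.o, k2)`, a
pushout complement `K1b` for `(r1.o, n1)` with pushout `I21` of `(r1.i, k1)`, and the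
pullback `K21` of `(w2, w1)`; the composite rule is the span of monomorphisms
`O21 ⟵ K21 ⟶ I21` with legs `q2 ≫ v2` and `q1 ≫ v1`. -/
structure CompData {𝒞 : Type u} [Category.{v} 𝒞] (r2 r1 : Rule 𝒞)
    (M : 𝒞) (p2 : M ⟶ r2.I) (p1 : M ⟶ r1.O) where
  mono_p2 : Mono p2
  mono_p1 : Mono p1
  N : 𝒞
  n2 : r2.I ⟶ N
  n1 : r1.O ⟶ N
  poN : IsPushout p2 p1 n2 n1
  mono_n2 : Mono n2
  mono_n1 : Mono n1
  K2b : 𝒞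
  k2 : r2.K ⟶ K2b
  w2 : K2b ⟶ N
  poc2 : IsPushout r2.i k2 n2 w2
  O21 : 𝒞
  c2 : r2.O ⟶ O21
  v2 : K2b ⟶ O21
  poO : IsPushout r2.o k2 c2 v2
  K1b : 𝒞
  k1 : r1.K ⟶ K1b
  w1 : K1b ⟶ N
  poc1 : IsPushout r1.o k1 n1 w1
  I21 : 𝒞
  c1 : r1.I ⟶ I21
  v1 : K1b ⟶ I21
  poI : IsPushout r1.i k1 c1 v1
  K21 : 𝒞
  q2 : K21 ⟶ K2b
  q1 : K21 ⟶ K1b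
  pbK : IsPullback q2 q1 w2 w1
  mono_oleg : Mono (q2 ≫ v2)
  mono_ileg : Mono (q1 ≫ v1)

/-- The DPO composite rule `r2 ▷[μ21] r1` extracted from composition data. -/
def CompData.rule {𝒞 : Type u} [Category.{v} 𝒞] {r2 r1 : Rule 𝒞}
    {M : 𝒞} {p2 : M ⟶ r2.I} {p1 : M ⟶ r1.O}
    (cd : CompData r2 r1 M p2 p1) : Rule 𝒞 :=
  ⟨cd.O21, cd.K21, cd.I21, cd.q2 ≫ cd.v2, cd.q1 ≫ cd.v1, cd.mono_oleg, cd.mono_ileg⟩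

/-- Two linear rules are isomorphic as spans. -/
def RuleIso {𝒞 : Type u} [Category.{v} 𝒞] (r r' : Rule 𝒞) : Prop :=
  ∃ (φO : r.O ≅ r'.O) (φK : r.K ≅ r'.K) (φI : r.I ≅ r'.I),
    r.o ≫ φO.hom = φK.hom ≫ r'.o ∧ r.i ≫ φI.hom = φK.hom ≫ r'.i

/-- `(b : A ⟶ D, d : D ⟶ X)` is a final pullback complement (FPC) of
`(c : B ⟶ X, a : A ⟶ B)`. -/
def IsFPC {𝒞 : Type u} [Category.{v} 𝒞] {A B D X : 𝒞}
    (a : A ⟶ B) (c : B ⟶ X) (b : A ⟶ D) (d : D ⟶ X) : Prop :=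
  IsPullback a b c d ∧
    ∀ ⦃P W : 𝒞⦄ (x : P ⟶ B) (y : P ⟶ W) (z : W ⟶ X), IsPullback x y c z →
      ∀ w : P ⟶ A, w ≫ a = x →
        ∃! ws : W ⟶ D, ws ≫ d = z ∧ y ≫ ws = w ≫ b

/-- The data of the SqPO composite of `r2` with `r1` along the span
`μ21 = (I2 ⟵p2— M —p1⟶ O1)`: defined exactly like the DPO composite, except that
the square over `K̄2` is constructed as a final pullback complement of `(n2, i2)`
instead of a pushout complement. -/
structure SqPOCompData {𝒞 : Type u} [Category.{v} 𝒞] (r2 r1 : Rule 𝒞)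
    (M : 𝒞) (p2 : M ⟶ r2.I) (p1 : M ⟶ r1.O) where
  mono_p2 : Mono p2
  mono_p1 : Mono p1
  N : 𝒞
  n2 : r2.I ⟶ N
  n1 : r1.O ⟶ N
  poN : IsPushout p2 p1 n2 n1
  mono_n2 : Mono n2
  mono_n1 : Mono n1
  K2b : 𝒞
  k2 : r2.K ⟶ K2b
  w2 : K2b ⟶ N
  fpc2 : IsFPC r2.i n2 k2 w2
  O21 : 𝒞
  c2 : r2.O ⟶ O21
  v2 : K2b ⟶ O21
  poO : IsPushout r2.o k2 c2 v2
  K1b : 𝒞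
  k1 : r1.K ⟶ K1b
  w1 : K1b ⟶ N
  poc1 : IsPushout r1.o k1 n1 w1
  I21 : 𝒞
  c1 : r1.I ⟶ I21
  v1 : K1b ⟶ I21
  poI : IsPushout r1.i k1 c1 v1
  K21 : 𝒞
  q2 : K21 ⟶ K2b
  q1 : K21 ⟶ K1b
  pbK : IsPullback q2 q1 w2 w1
  mono_oleg : Mono (q2 ≫ v2)
  mono_ileg : Mono (q1 ≫ v1)

/-- The SqPO composite rule extracted from SqPO composition data. -/
def SqPOCompData.rule {𝒞 : Type u} [Category.{v} 𝒞] {r2 r1 : Rule 𝒞}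
    {M : 𝒞} {p2 : M ⟶ r2.I} {p1 : M ⟶ r1.O}
    (cd : SqPOCompData r2 r1 M p2 p1) : Rule 𝒞 :=
  ⟨cd.O21, cd.K21, cd.I21, cd.q2 ≫ cd.v2, cd.q1 ≫ cd.v1, cd.mono_oleg, cd.mono_ileg⟩

/-!
A pushout along a monomorphism `a` in an adhesive category is van Kampen. Let `z : W ⟶ X` be a
morphism whose base change to `B` factors through `a : A ⟶ B`. Pulling the pushout `X = B ⊔_A D`
back along `z` gives a pushout with apex `W` in which the base change of `a` is invertible; hence so
is the base change of `d : D ⟶ X`, that is, `z` factors through `d`. This is the finality of the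
pushout complement. So DPO composition data
are a special case of SqPO composition data, and the latter are determined up to isomorphism by the
universal properties used to build them.
-/

section VanKampen

variable {𝒞 : Type u} [Category.{v} 𝒞] {A B D X : 𝒞}
  {a : A ⟶ B} {c : B ⟶ X} {b : A ⟶ D} {d : D ⟶ X}

theorem isIso_snd_of_isVanKampen_of_factors [Mono a] {h : IsPushout a b c d}
    (hVK : h.IsVanKampen) {P Q W : 𝒞} {x : P ⟶ B} {y : P ⟶ W} {z : W ⟶ X} {r : Q ⟶ D} {q : Q ⟶ W}
    (hP : IsPullback x y c z) (hQ : IsPullback r q d z) {w : P ⟶ A} (hw : w ≫ a = x) :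
    IsIso q := by
  have hPA : IsPullback (𝟙 P) w x a := IsPullback.of_horiz_isIso_mono ⟨by simp [hw]⟩
  have := hPA.hasPullback
  obtain ⟨R, p, _, t, hR, -, hpo⟩ := hVK.exists_cube_filling hP.flip hQ.flip
  have : IsIso p := by
    rw [← hR.isoIsPullback_hom_fst _ _ hPA]
    infer_instance
  exact hpo.isIso_inr_of_isIso

theorem isFPC_of_isVanKampen [Mono a] [HasPullbacksAlong d] {h : IsPushout a b c d}
    (hVK : h.IsVanKampen) : IsFPC a c b d := by
  have hd : Mono d := hVK.mono_of_mono_left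
  refine ⟨hVK.isPullback_of_mono_left, fun P W x y z hP w hw ↦ ?_⟩
  have hQ := (IsPullback.of_hasPullback z d).flip
  have : IsIso (pullback.fst z d) := isIso_snd_of_isVanKampen_of_factors hVK hP hQ hw
  obtain ⟨s, hs⟩ : ∃ s : W ⟶ D, s ≫ d = z :=
    ⟨inv (pullback.fst z d) ≫ pullback.snd z d, by simp [← pullback.condition]⟩
  refine ⟨s, ⟨hs, ?_⟩, fun s' hs' ↦ ?_⟩
  · rw [← cancel_mono d]
    calc
      (y ≫ s) ≫ d = x ≫ c := by rw [Category.assoc, hs, hP.w]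
      _ = (w ≫ b) ≫ d := by rw [← hw, Category.assoc, h.w, Category.assoc]
  · rw [← cancel_mono d, hs, hs'.1]

theorem isFPC_of_isPushout_of_mono_left [Adhesive 𝒞] [Mono a] (h : IsPushout a b c d) :
    IsFPC a c b d := by
  have : Mono d := Adhesive.mono_of_isPushout_of_mono_left h
  have : HasPullbacksAlong d := fun z ↦ hasPullback_symmetry d z
  exact isFPC_of_isVanKampen (Adhesive.van_kampen h)

end VanKampen

section Uniqueness

variable {𝒞 : Type u} [Category.{v} 𝒞]

namespace IsFPC

variable {A B D D' X X' : 𝒞} {a : A ⟶ B} {c : B ⟶ X}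
  {b : A ⟶ D} {d : D ⟶ X} {b' : A ⟶ D'} {d' : D' ⟶ X}

theorem comp_iso (h : IsFPC a c b d) (e : X ≅ X') : IsFPC a (c ≫ e.hom) b (d ≫ e.hom) := by
  refine ⟨h.1.of_iso (.refl _) (.refl _) (.refl _) e (by simp) (by simp) (by simp) (by simp),
    fun P W x y z hP w hw ↦ ?_⟩
  have hP' : IsPullback x y c (z ≫ e.inv) :=
    hP.of_iso (.refl _) (.refl _) (.refl _) e.symm (by simp) (by simp) (by simp) (by simp)
  simpa only [← Category.assoc, ← Iso.eq_comp_inv] using h.2 x y _ hP' w hw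

theorem existsUnique_hom (h : IsFPC a c b d) (h' : IsPullback a b' c d') :
    ∃! f : D' ⟶ D, f ≫ d = d' ∧ b' ≫ f = b := by
  simpa only [Category.id_comp] using h.2 a b' d' h' (𝟙 A) (Category.id_comp a)

theorem exists_iso (h : IsFPC a c b d) (h' : IsFPC a c b' d') :
    ∃ φ : D ≅ D', b ≫ φ.hom = b' ∧ φ.hom ≫ d' = d := by
  obtain ⟨f, ⟨hfd, hfb⟩, -⟩ := h'.existsUnique_hom h.1
  obtain ⟨g, ⟨hgd, hgb⟩, -⟩ := h.existsUnique_hom h'.1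
  have hfg : f ≫ g = 𝟙 D := (h.existsUnique_hom h.1).unique
    ⟨by rw [Category.assoc, hgd, hfd], by rw [reassoc_of% hfb, hgb]⟩ ⟨by simp, by simp⟩
  have hgf : g ≫ f = 𝟙 D' := (h'.existsUnique_hom h'.1).unique
    ⟨by rw [Category.assoc, hfd, hgd], by rw [reassoc_of% hgb, hfb]⟩ ⟨by simp, by simp⟩
  exact ⟨⟨f, g, hfg, hgf⟩, hfb, hfd⟩

end IsFPC

theorem exists_iso_of_isPushout {Z X Y P Z' X' Y' P' : 𝒞}
    {f : Z ⟶ X} {g : Z ⟶ Y} {inl : X ⟶ P} {inr : Y ⟶ P}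
    {f' : Z' ⟶ X'} {g' : Z' ⟶ Y'} {inl' : X' ⟶ P'} {inr' : Y' ⟶ P'}
    (h : IsPushout f g inl inr) (h' : IsPushout f' g' inl' inr')
    (eZ : Z ≅ Z') (eX : X ≅ X') (eY : Y ≅ Y')
    (hf : f ≫ eX.hom = eZ.hom ≫ f') (hg : g ≫ eY.hom = eZ.hom ≫ g') :
    ∃ φ : P ≅ P', inl ≫ φ.hom = eX.hom ≫ inl' ∧ inr ≫ φ.hom = eY.hom ≫ inr' := by
  have h'' : IsPushout f g (eX.hom ≫ inl') (eY.hom ≫ inr') :=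
    h'.of_iso' eZ eX eY (.refl _) hf.symm hg.symm (by simp) (by simp)
  exact ⟨h.isoIsPushout _ _ h'', by simp, by simp⟩

theorem exists_iso_of_isPullback {P X Y Z P' X' Y' Z' : 𝒞}
    {fst : P ⟶ X} {snd : P ⟶ Y} {f : X ⟶ Z} {g : Y ⟶ Z}
    {fst' : P' ⟶ X'} {snd' : P' ⟶ Y'} {f' : X' ⟶ Z'} {g' : Y' ⟶ Z'}
    (h : IsPullback fst snd f g) (h' : IsPullback fst' snd' f' g')
    (eX : X ≅ X') (eY : Y ≅ Y') (eZ : Z ≅ Z')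
    (hf : eX.hom ≫ f' = f ≫ eZ.hom) (hg : eY.hom ≫ g' = g ≫ eZ.hom) :
    ∃ φ : P ≅ P', φ.hom ≫ fst' = fst ≫ eX.hom ∧ φ.hom ≫ snd' = snd ≫ eY.hom := by
  have h'' : IsPullback (fst ≫ eX.hom) (snd ≫ eY.hom) f' g' :=
    h.of_iso (.refl _) eX eY eZ (by simp) (by simp) hf.symm hg.symm
  exact ⟨h''.isoIsPullback _ _ h', by simp, by simp⟩

end Uniqueness

section Composition

variable {𝒞 : Type u} [Category.{v} 𝒞] [Adhesive 𝒞] {r1 r2 : Rule 𝒞}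
  {M : 𝒞} {p2 : M ⟶ r2.I} {p1 : M ⟶ r1.O}

theorem CompData.isFPC (cd : CompData r2 r1 M p2 p1) : IsFPC r2.i cd.n2 cd.k2 cd.w2 :=
  have := r2.mono_i
  isFPC_of_isPushout_of_mono_left cd.poc2

/-- DPO composition data regarded as SqPO composition data; the underlying composite rule is
unchanged definitionally. -/
def CompData.toSqPOCompData (cd : CompData r2 r1 M p2 p1) : SqPOCompData r2 r1 M p2 p1 :=
  { cd with fpc2 := cd.isFPC }

theorem SqPOCompData.ruleIso (s t : SqPOCompData r2 r1 M p2 p1) : RuleIso s.rule t.rule := by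
  have := r1.mono_o
  let e : s.N ≅ t.N := s.poN.isoIsPushout _ _ t.poN
  have hn2 : s.n2 ≫ e.hom = t.n2 := s.poN.inl_isoIsPushout_hom _ _ t.poN
  have hn1 : s.n1 ≫ e.hom = t.n1 := s.poN.inr_isoIsPushout_hom _ _ t.poN
  obtain ⟨e2, hk2, hw2⟩ := (hn2 ▸ s.fpc2.comp_iso e).exists_iso t.fpc2
  obtain ⟨e1, hk1, hw1⟩ :=
    (hn1 ▸ (isFPC_of_isPushout_of_mono_left s.poc1).comp_iso e).exists_iso
      (isFPC_of_isPushout_of_mono_left t.poc1)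
  obtain ⟨φO, -, hφO⟩ := exists_iso_of_isPushout s.poO t.poO (.refl _) (.refl _) e2
    (by simp) (by simp [hk2])
  obtain ⟨φI, -, hφI⟩ := exists_iso_of_isPushout s.poI t.poI (.refl _) (.refl _) e1
    (by simp) (by simp [hk1])
  obtain ⟨φK, hq2, hq1⟩ := exists_iso_of_isPullback s.pbK t.pbK e2 e1 e hw2 hw1
  refine ⟨φO, φK, φI, ?_, ?_⟩
  · calc
      (s.q2 ≫ s.v2) ≫ φO.hom = (s.q2 ≫ e2.hom) ≫ t.v2 := by simp only [Category.assoc, hφO]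
      _ = φK.hom ≫ t.q2 ≫ t.v2 := by rw [← hq2, Category.assoc]
  · calc
      (s.q1 ≫ s.v1) ≫ φI.hom = (s.q1 ≫ e1.hom) ≫ t.v1 := by simp only [Category.assoc, hφI]
      _ = φK.hom ≫ t.q1 ≫ t.v1 := by rw [← hq1, Category.assoc]

end Composition

theorem dpo_ccc_part_iii_sqpo_coincidence_general
    {𝒞 : Type u} [Category.{v} 𝒞] [Adhesive 𝒞] (r1 r2 : Rule 𝒞)
    {M21 : 𝒞} {p2 : M21 ⟶ r2.I} {p1 : M21 ⟶ r1.O} (c21 : CompData r2 r1 M21 p2 p1) :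
    IsFPC r2.i c21.n2 c21.k2 c21.w2 ∧
      ∀ csq : SqPOCompData r2 r1 M21 p2 p1, RuleIso csq.rule c21.rule :=
  ⟨c21.isFPC, fun csq ↦ csq.ruleIso c21.toSqPOCompData⟩

/-- **Compositional concurrent commutativity, part (iii): coincidence of SqPO and
DPO composition under sequential independence.** In the setting of compositional
sequential independence (monomorphisms `u`, `v` as below), the pushout-complement
square `(k2, w2)` for `(i2, n2)` is a final pullback complement of `(n2, i2)`;
consequently every SqPO composite of `r2` with `r1` along `μ21` is isomorphic as a
span to the DPO composite `r2 ▷[μ21] r1`. -/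
theorem dpo_ccc_part_iii_sqpo_coincidence
    {𝒞 : Type u} [Category.{v} 𝒞] [Adhesive 𝒞]
    [HasInitial 𝒞] [HasStrictInitialObjects 𝒞] [InitialMonoClass 𝒞]
    (hfact : HasEpiMonoFact 𝒞) (hfin : Finitary 𝒞)
    (r1 r2 : Rule 𝒞)
    {M21 : 𝒞} {p2 : M21 ⟶ r2.I} {p1 : M21 ⟶ r1.O}
    (c21 : CompData r2 r1 M21 p2 p1)
    (u : r1.O ⟶ c21.K2b) (v : r2.I ⟶ c21.K1b) [Mono u] [Mono v]
    (hu : u ≫ c21.w2 = c21.n1) (hv : v ≫ c21.w1 = c21.n2) :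
    IsFPC r2.i c21.n2 c21.k2 c21.w2 ∧
      ∀ csq : SqPOCompData r2 r1 M21 p2 p1, RuleIso csq.rule c21.rule :=
  dpo_ccc_part_iii_sqpo_coincidence_general r1 r2 c21
end

section
/- (Amalgamation of sequentially independent rule compositions.) Let C be a category satisfying the stated assumptions, let r1 = (O1 ←o1— K1 —i1→ I1) and r2 = (O2 ←o2— K2 —i2→ I2) be linear rules, and assume μ21 = (I2 ← M21 → O1) is a DPO-admissible match of r2 into r1, with associated pushout N21 (induced morphisms n2 : I2 → N21, n1 : O1 → N21), pushout complements K̄2 (for (i2, n2)) and K̄1 (for (o1, n1)), and assume there exist monomorphisms u : O1 → K̄2 and v : I2 → K̄1 such that (K̄2 → N21) ∘ u = n1 and (K̄1 → N21) ∘ v = n2. Let a1 : M21 → K1 and a2 : M21 → K2 be the monomorphisms obtained from the pullbacks of (v : I2 → K̄1, K1 → K̄1) and (u : O1 → K̄2, K2 → K̄2), respectively. Then, writing O21, I21 for the output and input objects and K21 for the pullback object of the DPO composite r2 ▷[μ21] r1: O21 is a pushout of the span (O2 ←(o2 ∘ a2)— M21 → O1), K21 is a pushout of the span (K2 ←a2—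 M21 —a1→ K1), and I21 is a pushout of the span (I2 ← M21 —(i1 ∘ a1)→ I1), each up to isomorphism compatible with the canonical morphisms. -/
open CategoryTheory CategoryTheory.Limits

universe v u

/-!
Everything comes from restricting a pushout along a monomorphism. If `N` is the pushout of
`I ⟵ M ⟶ O` and `w : D ⟶ N` is a monomorphism through which `O ⟶ N` factors, then pulling the
pushout square back along `w` leaves `M` and `O` unchanged, so the van Kampen property exhibits `D`
as the pushout of `I ×[N] D ⟵ M ⟶ O`.

In an adhesive category a pushout along a monomorphism is also a pullback. Restricting
`N21` to `K̄2` and to `K̄1` therefore exhibits these as the pushouts `K2 +[M21] O1` and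
`I2 +[M21] K1`, and pasting with the second square of each derivation gives `O21` and `I21`.
Restricting `K̄2 = K2 +[M21] O1` once more, along `K21 ⟶ K̄2`, replaces `O1` by
`O1 ×[N21] K̄1 = K1` and gives `K21`.
-/

section

variable {𝒞 : Type u} [Category.{v} 𝒞] {M K I O D N : 𝒞}
  {p₂ : M ⟶ I} {p₁ : M ⟶ O} {n₂ : I ⟶ N} {n₁ : O ⟶ N}
  {i : K ⟶ I} {k : K ⟶ D} {w : D ⟶ N} {a : M ⟶ K} {x : O ⟶ D}

theorem comp_eq_of_commSq_of_fac [Mono n₂] (hN : CommSq p₂ p₁ n₂ n₁) (hD : CommSq i k n₂ w)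
    (hx : x ≫ w = n₁) (ha : p₁ ≫ x = a ≫ k) : a ≫ i = p₂ := by
  rw [← cancel_mono n₂]
  calc (a ≫ i) ≫ n₂ = (a ≫ k) ≫ w := by simp only [Category.assoc, hD.w]
    _ = (p₁ ≫ x) ≫ w := by rw [ha]
    _ = p₂ ≫ n₂ := by rw [Category.assoc, hx, hN.w]

variable [Adhesive 𝒞]

theorem isPushout_of_isPullback_of_fac [Mono p₂] [Mono w]
    (hN : IsPushout p₂ p₁ n₂ n₁) (hK : IsPullback i k n₂ w)
    (ha : a ≫ i = p₂) (hx : x ≫ w = n₁) : IsPushout a p₁ k x := by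
  have : Mono i := hK.mono_fst_of_mono
  have comm : a ≫ k = p₁ ≫ x := by
    rw [← cancel_mono w, Category.assoc, Category.assoc, ← hK.w, reassoc_of% ha, hx, hN.w]
  have isPullback_a : IsPullback a (𝟙 M) i p₂ := .of_vert_isIso_mono ⟨by rw [ha, Category.id_comp]⟩
  have isPullback_x : IsPullback x (𝟙 O) w n₁ := .of_vert_isIso_mono ⟨by rw [hx, Category.id_comp]⟩
  exact (Adhesive.van_kampen hN a p₁ k x (𝟙 M) i (𝟙 O) w isPullback_a
    (IsPullback.id_vert p₁) hK.flip.toCommSq isPullback_x.toCommSq ⟨comm⟩).mpr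
    ⟨hK.flip, isPullback_x⟩

theorem isPushout_of_isPushout_of_fac [Mono p₂] [Mono i] [Mono n₂]
    (hN : IsPushout p₂ p₁ n₂ n₁) (hD : IsPushout i k n₂ w)
    (hx : x ≫ w = n₁) (ha : p₁ ≫ x = a ≫ k) : IsPushout a p₁ k x :=
  have := Adhesive.mono_of_isPushout_of_mono_left hD
  isPushout_of_isPullback_of_fac hN (Adhesive.isPullback_of_isPushout_of_mono_left hD)
    (comp_eq_of_commSq_of_fac hN.toCommSq hD.toCommSq hx ha) hx

end

namespace CompData

variable {𝒞 : Type u} [Category.{v} 𝒞] [Adhesive 𝒞] {r1 r2 : Rule 𝒞} {M21 : 𝒞}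
  {p2 : M21 ⟶ r2.I} {p1 : M21 ⟶ r1.O} (c21 : CompData r2 r1 M21 p2 p1)
  {u : r1.O ⟶ c21.K2b} {v : r2.I ⟶ c21.K1b} {a2 : M21 ⟶ r2.K} {a1 : M21 ⟶ r1.K}

theorem mono_q2 : Mono c21.q2 :=
  have := r1.mono_o
  c21.pbK.mono_fst_of_mono (Adhesive.mono_of_isPushout_of_mono_left c21.poc1)

theorem isPushout_K2b (hu : u ≫ c21.w2 = c21.n1) (ha2 : p1 ≫ u = a2 ≫ c21.k2) :
    IsPushout a2 p1 c21.k2 u :=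
  have := c21.mono_p2
  have := c21.mono_n2
  have := r2.mono_i
  isPushout_of_isPushout_of_fac c21.poN c21.poc2 hu ha2

theorem isPushout_K1b (hv : v ≫ c21.w1 = c21.n2) (ha1 : p2 ≫ v = a1 ≫ c21.k1) :
    IsPushout a1 p2 c21.k1 v :=
  have := c21.mono_p1
  have := c21.mono_n1
  have := r1.mono_o
  isPushout_of_isPushout_of_fac c21.poN.flip c21.poc1 hv ha1

theorem isPullback_o_q2 (hu : u ≫ c21.w2 = c21.n1) {b1 : r1.K ⟶ c21.K21}
    (hb1q2 : b1 ≫ c21.q2 = r1.o ≫ u) (hb1q1 : b1 ≫ c21.q1 = c21.k1) :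
    IsPullback r1.o b1 u c21.q2 := by
  have := r1.mono_o
  have outer : IsPullback (b1 ≫ c21.q1) r1.o c21.w1 (u ≫ c21.w2) := by
    rw [hb1q1, hu]
    exact (Adhesive.isPullback_of_isPushout_of_mono_left c21.poc1).flip
  exact (IsPullback.of_right outer hb1q2 c21.pbK.flip).flip

theorem isPushout_K21 (hu : u ≫ c21.w2 = c21.n1) (hv : v ≫ c21.w1 = c21.n2)
    (ha2 : p1 ≫ u = a2 ≫ c21.k2) (ha1 : p2 ≫ v = a1 ≫ c21.k1)
    {b2 : r2.K ⟶ c21.K21} {b1 : r1.K ⟶ c21.K21} (hb2q2 : b2 ≫ c21.q2 = c21.k2)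
    (hb1q2 : b1 ≫ c21.q2 = r1.o ≫ u) (hb1q1 : b1 ≫ c21.q1 = c21.k1) :
    IsPushout a2 a1 b2 b1 := by
  have := c21.mono_p1
  have := c21.mono_n1
  have := c21.mono_q2
  have ha1o : a1 ≫ r1.o = p1 :=
    comp_eq_of_commSq_of_fac c21.poN.flip.toCommSq c21.poc1.toCommSq hv ha1
  exact (isPushout_of_isPullback_of_fac (c21.isPushout_K2b hu ha2).flip
    (c21.isPullback_o_q2 hu hb1q2 hb1q1) ha1o hb2q2).flip

end CompData

theorem dpo_amalgamation_of_independent_composition_general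
    {𝒞 : Type u} [Category.{v} 𝒞] [Adhesive 𝒞] {r1 r2 : Rule 𝒞}
    {M21 : 𝒞} {p2 : M21 ⟶ r2.I} {p1 : M21 ⟶ r1.O} (c21 : CompData r2 r1 M21 p2 p1)
    {u : r1.O ⟶ c21.K2b} {v : r2.I ⟶ c21.K1b}
    (hu : u ≫ c21.w2 = c21.n1) (hv : v ≫ c21.w1 = c21.n2)
    {a2 : M21 ⟶ r2.K} (ha2 : p1 ≫ u = a2 ≫ c21.k2)
    {a1 : M21 ⟶ r1.K} (ha1 : p2 ≫ v = a1 ≫ c21.k1) :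
    IsPushout (a2 ≫ r2.o) p1 c21.c2 (u ≫ c21.v2) ∧
    (∃ (b2 : r2.K ⟶ c21.K21) (b1 : r1.K ⟶ c21.K21),
      b2 ≫ c21.q2 = c21.k2 ∧ b2 ≫ c21.q1 = r2.i ≫ v ∧
      b1 ≫ c21.q2 = r1.o ≫ u ∧ b1 ≫ c21.q1 = c21.k1 ∧
      IsPushout a2 a1 b2 b1) ∧
    IsPushout p2 (a1 ≫ r1.i) (v ≫ c21.v1) c21.c1 := by
  have isPushout_O21 := (c21.isPushout_K2b hu ha2).paste_horiz c21.poO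
  have isPushout_I21 := ((c21.isPushout_K1b hv ha1).paste_horiz c21.poI).flip
  obtain ⟨b2, hb2q2, hb2q1⟩ := c21.pbK.exists_lift c21.k2 (r2.i ≫ v)
    (by rw [Category.assoc, hv, c21.poc2.w])
  obtain ⟨b1, hb1q2, hb1q1⟩ := c21.pbK.exists_lift (r1.o ≫ u) c21.k1
    (by rw [Category.assoc, hu, c21.poc1.w])
  exact ⟨isPushout_O21, ⟨b2, b1, hb2q2, hb2q1, hb1q2, hb1q1,
    c21.isPushout_K21 hu hv ha2 ha1 hb2q2 hb1q2 hb1q1⟩, isPushout_I21⟩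

/-- **Amalgamation of sequentially independent rule compositions.** In the setting
of compositional sequential independence (monomorphisms `u : O1 ⟶ K̄2`,
`v : I2 ⟶ K̄1` with `u ≫ w2 = n1`, `v ≫ w1 = n2`, and induced monomorphisms
`a2 : M21 ⟶ K2`, `a1 : M21 ⟶ K1`), the objects of the DPO composite
`r2 ▷[μ21] r1` are amalgamated pushouts: `O21` is the pushout of
`(O2 ⟵(a2 ≫ o2)— M21 —p1⟶ O1)` with canonical cocone `(c2, u ≫ v2)`; `K21` is the
pushout of `(K2 ⟵a2— M21 —a1⟶ K1)` with cocone given by the canonically induced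
morphisms `b2 : K2 ⟶ K21` and `b1 : K1 ⟶ K21`; and `I21` is the pushout of
`(I2 ⟵p2— M21 —(a1 ≫ i1)⟶ I1)` with canonical cocone `(v ≫ v1, c1)`. -/
theorem dpo_amalgamation_of_independent_composition
    {𝒞 : Type u} [Category.{v} 𝒞] [Adhesive 𝒞]
    [HasInitial 𝒞] [HasStrictInitialObjects 𝒞] [InitialMonoClass 𝒞]
    (hfact : HasEpiMonoFact 𝒞) (hfin : Finitary 𝒞)
    (r1 r2 : Rule 𝒞)
    {M21 : 𝒞} {p2 : M21 ⟶ r2.I} {p1 : M21 ⟶ r1.O}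
    (c21 : CompData r2 r1 M21 p2 p1)
    (u : r1.O ⟶ c21.K2b) (v : r2.I ⟶ c21.K1b) [Mono u] [Mono v]
    (hu : u ≫ c21.w2 = c21.n1) (hv : v ≫ c21.w1 = c21.n2)
    (a2 : M21 ⟶ r2.K) [Mono a2] (ha2 : IsPullback p1 a2 u c21.k2)
    (a1 : M21 ⟶ r1.K) [Mono a1] (ha1 : IsPullback p2 a1 v c21.k1) :
    IsPushout (a2 ≫ r2.o) p1 c21.c2 (u ≫ c21.v2) ∧
    (∃ (b2 : r2.K ⟶ c21.K21) (b1 : r1.K ⟶ c21.K21),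
      b2 ≫ c21.q2 = c21.k2 ∧ b2 ≫ c21.q1 = r2.i ≫ v ∧
      b1 ≫ c21.q2 = r1.o ≫ u ∧ b1 ≫ c21.q1 = c21.k1 ∧
      IsPushout a2 a1 b2 b1) ∧
    IsPushout p2 (a1 ≫ r1.i) (v ≫ c21.v1) c21.c1 :=
  dpo_amalgamation_of_independent_composition_general c21 hu hv ha2.w ha1.w
end
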